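/- Let D ⊆ ℂ be open and let B, f, f⋆, ψ, ω, ρ : D → ℂ be real-differentiable on D. Assume: ∂_{λ̄} f = B·conj(f), ∂_{λ̄} f⋆ = −conj(B)·conj(f⋆), ∂_{λ̄} ψ = B·conj(ψ) on D; ω satisfies ∂_λ ω = f·f⋆, ∂_{λ̄} ω = −conj(f·f⋆), conj(ω) = −ω and ω(λ) ≠ 0 on D; ρ satisfies ∂_λ ρ = ψ·f⋆, ∂_{λ̄} ρ = −conj(ψ·f⋆) and conj(ρ) = −ρ on D. Then the Moutard-transformed function ψ̃ := ψ − (ρ/ω)·f satisfies ∂_{λ̄} ψ̃ = B̃·conj(ψ̃) on D, where B̃ := B + f·conj(f⋆)/ω. -/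

import Mathlib

open Complex ComplexConjugate

/-- Wirtinger derivative `∂_{λ̄} u` of `u : ℂ → ℂ`, viewed as a real-differentiable map. -/
noncomputable def dbar (u : ℂ → ℂ) (l : ℂ) : ℂ :=
  (1 / 2 : ℂ) * ((fderiv ℝ u l) 1 + Complex.I * (fderiv ℝ u l) Complex.I)

/-- Wirtinger derivative `∂_λ u`. -/
noncomputable def dz (u : ℂ → ℂ) (l : ℂ) : ℂ :=
  (1 / 2 : ℂ) * ((fderiv ℝ u l) 1 - Complex.I * (fderiv ℝ u l) Complex.I)

theorem dbar_mul_aux {u v : ℂ → ℂ} {l : ℂ} (hu : DifferentiableAt ℝ u l)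
    (hv : DifferentiableAt ℝ v l) :
    dbar (fun w => u w * v w) l = dbar u l * v l + u l * dbar v l := by
  unfold dbar
  rw [(hu.hasFDerivAt.fun_mul hv.hasFDerivAt).fderiv]
  simp only [ContinuousLinearMap.add_apply, ContinuousLinearMap.smul_apply, smul_eq_mul]
  ring

theorem dbar_sub_aux {u v : ℂ → ℂ} {l : ℂ} (hu : DifferentiableAt ℝ u l)
    (hv : DifferentiableAt ℝ v l) :
    dbar (fun w => u w - v w) l = dbar u l - dbar v l := by
  unfold dbar
  rw [(hu.hasFDerivAt.fun_sub hv.hasFDerivAt).fderiv]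
  simp only [ContinuousLinearMap.sub_apply]
  ring

/-- Moutard-type transform for generalized analytic functions:
the transformed function `ψ̃ = ψ - (ρ/ω)·f` satisfies `∂_{λ̄} ψ̃ = B̃·conj ψ̃`
with `B̃ = B + f·conj(f⋆)/ω`. -/
theorem moutard_transform_psi
    (D : Set ℂ) (hD : IsOpen D)
    (B f fs ψ ω ρ : ℂ → ℂ)
    (hBdiff : ∀ l ∈ D, DifferentiableAt ℝ B l)
    (hfdiff : ∀ l ∈ D, DifferentiableAt ℝ f l)
    (hfsdiff : ∀ l ∈ D, DifferentiableAt ℝ fs l)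
    (hψdiff : ∀ l ∈ D, DifferentiableAt ℝ ψ l)
    (hωdiff : ∀ l ∈ D, DifferentiableAt ℝ ω l)
    (hρdiff : ∀ l ∈ D, DifferentiableAt ℝ ρ l)
    (hf : ∀ l ∈ D, dbar f l = B l * conj (f l))
    (hfs : ∀ l ∈ D, dbar fs l = -conj (B l) * conj (fs l))
    (hψ : ∀ l ∈ D, dbar ψ l = B l * conj (ψ l))
    (hω1 : ∀ l ∈ D, dz ω l = f l * fs l)
    (hω2 : ∀ l ∈ D, dbar ω l = -conj (f l * fs l))
    (hω3 : ∀ l ∈ D, conj (ω l) = -ω l)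
    (hω4 : ∀ l ∈ D, ω l ≠ 0)
    (hρ1 : ∀ l ∈ D, dz ρ l = ψ l * fs l)
    (hρ2 : ∀ l ∈ D, dbar ρ l = -conj (ψ l * fs l))
    (hρ3 : ∀ l ∈ D, conj (ρ l) = -ρ l) :
    ∀ l ∈ D,
      dbar (fun w => ψ w - (ρ w / ω w) * f w) l =
        (B l + f l * conj (fs l) / ω l) * conj (ψ l - (ρ l / ω l) * f l) := by
  intro l hl
  have hw := hω4 l hl
  have hq : DifferentiableAt ℝ (fun w => ρ w / ω w) l := by
    simp only [div_eq_mul_inv]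
    exact (hρdiff l hl).mul ((hωdiff l hl).inv hw)
  have hev : (fun w => (ρ w / ω w) * ω w) =ᶠ[nhds l] ρ := by
    filter_upwards [hD.mem_nhds hl] with w hwD
    exact div_mul_cancel₀ _ (hω4 w hwD)
  have h1 : dbar (fun w => (ρ w / ω w) * ω w) l = dbar ρ l := by
    unfold dbar
    rw [hev.fderiv_eq]
  rw [dbar_mul_aux hq (hωdiff l hl), hω2 l hl, hρ2 l hl] at h1
  have h2 : dbar (fun w => ρ w / ω w) l
      = (-conj (ψ l * fs l) + ρ l / ω l * conj (f l * fs l)) / ω l := by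
    rw [eq_div_iff hw]
    linear_combination h1
  rw [dbar_sub_aux (hψdiff l hl) (hq.fun_mul (hfdiff l hl)), dbar_mul_aux hq (hfdiff l hl), h2,
    hψ l hl, hf l hl]
  simp only [map_sub, map_mul, map_div₀, hω3 l hl, hρ3 l hl]
  field_simp
  ring
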